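/- Let f ∈ N_{k,c}^0(λ, μ, φ) with 0 < μ < 1, k = p + (b+2)/2 ∉ {0, −1, −2, …}, λ real with λ ≤ −1 and Re(μk/λ) ≥ 0, and φ convex univalent on E with φ(0) = 1 (and S_{k}^c f(z)/z, S_{k+1}^c f(z)/z nonvanishing on E). Then (S_k^c f(z)/S_{k+1}^c f(z))·(z/S_{k+1}^c f(z))^μ ≺ φ(z). -/

import Mathlib

open Complex Set

noncomputable section

/-- The open unit disk in ℂ. -/
def unitDisk : Set ℂ := Metric.ball 0 1

/-- Pochhammer symbol `(x)_n = x (x+1) ⋯ (x+n-1)`. -/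
def poch (x : ℂ) (n : ℕ) : ℂ := ∏ i ∈ Finset.range n, (x + i)

/-- `k` is not a nonpositive integer `0, -1, -2, …`. -/
def NotNonposInt (k : ℂ) : Prop := ∀ n : ℕ, k ≠ -(n : ℂ)

/-- `a` is the coefficient sequence of a function `f(z) = z + ∑_{n≥2} a_n z^n`
in the class `A` of normalized analytic functions on the unit disk. -/
def InA (a : ℕ → ℂ) : Prop :=
  a 0 = 0 ∧ a 1 = 1 ∧ ∀ z ∈ unitDisk, Summable fun n => a n * z ^ n

/-- The generalized Struve convolution operator `S_k^c` applied to
`f(z) = z + ∑_{n≥2} a_n z^n`, namely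
`S_k^c f(z) = z + ∑_{n≥1} (-c/4)^n a_{n+1} z^{n+1} / ((3/2)_n (k)_n)`. -/
def struveOp (k c : ℂ) (a : ℕ → ℂ) (z : ℂ) : ℂ :=
  z + ∑' n : ℕ,
    (-c / 4) ^ (n + 1) / (poch (3 / 2) (n + 1) * poch k (n + 1)) * a (n + 2) * z ^ (n + 2)

/-- Subordination of analytic functions on the unit disk. -/
def Subord (f g : ℂ → ℂ) : Prop :=
  ∃ w : ℂ → ℂ, AnalyticOnNhd ℂ w unitDisk ∧ w 0 = 0 ∧ (∀ z ∈ unitDisk, ‖w z‖ < 1) ∧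
    ∀ z ∈ unitDisk, f z = g (w z)

/-- `(z / F z) ^ μ` (principal branch), with the removable singularity at `z = 0`
filled in with the value `1`. -/
def ratioPow (μ : ℝ) (F : ℂ → ℂ) (z : ℂ) : ℂ :=
  (if z = 0 then 1 else z / F z) ^ (μ : ℂ)

/-- `F z / G z`, with the removable singularity at `z = 0` filled in with value `1`. -/
def ratioQ (F G : ℂ → ℂ) (z : ℂ) : ℂ := if z = 0 then 1 else F z / G z

/-- The expression
`e^{iα} {(1+λ)(z/S_{k+1}f)^μ − λ (S_k f/S_{k+1} f)(z/S_{k+1} f)^μ}`. -/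
def Jfun (α : ℝ) (lam : ℂ) (μ : ℝ) (Sk Sk1 : ℂ → ℂ) (z : ℂ) : ℂ :=
  exp (α * I) * ((1 + lam) * ratioPow μ Sk1 z - lam * ratioQ Sk Sk1 z * ratioPow μ Sk1 z)

/-- Membership `f ∈ N_{k,c}^α(λ, μ, φ)` for `f(z) = z + ∑_{n≥2} a_n z^n`. -/
def memN (α : ℝ) (lam : ℂ) (μ : ℝ) (k c : ℂ) (φ : ℂ → ℂ) (a : ℕ → ℂ) : Prop :=
  Subord (Jfun α lam μ (struveOp k c a) (struveOp (k + 1) c a))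
    (fun z => (Real.cos α : ℂ) * φ z + (Real.sin α : ℂ) * I)

/-- `φ` is convex univalent on the unit disk. -/
def ConvexUnivalent (φ : ℂ → ℂ) : Prop :=
  AnalyticOnNhd ℂ φ unitDisk ∧ InjOn φ unitDisk ∧ Convex ℝ (φ '' unitDisk)

/-- `F z / z` is nonvanishing on the unit disk. -/
def Nonvan (F : ℂ → ℂ) : Prop := ∀ z ∈ unitDisk, z ≠ 0 → F z ≠ 0

/-- The Gaussian hypergeometric function `₂F₁(a,b,c;z)` (as a series). -/
def hyp2F1 (a b c z : ℂ) : ℂ :=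
  ∑' n : ℕ, poch a n * poch b n / (poch c n * (n.factorial : ℂ)) * z ^ n

open Filter Topology

lemma aux_isOpen_disk : IsOpen unitDisk := Metric.isOpen_ball

lemma aux_mem_disk {z : ℂ} : z ∈ unitDisk ↔ ‖z‖ < 1 := by simp [unitDisk]

lemma aux_zero_mem : (0 : ℂ) ∈ unitDisk := by simp [aux_mem_disk]

lemma aux_preconn : IsPreconnected unitDisk := (convex_ball (0 : ℂ) 1).isPreconnected

/-- half-plane version of the Hallenbeck-Ruscheweyh lemma -/
lemma aux_half_plane (P H : ℂ → ℂ) (γ : ℂ) (hγ : 0 ≤ γ.re)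
    (hP : DifferentiableOn ℂ P unitDisk)
    (hPH : ∀ z ∈ unitDisk, P z + z * deriv P z / γ = H z)
    (hH : ∀ z ∈ unitDisk, 0 < (H z).re) : ∀ z ∈ unitDisk, 0 < (P z).re := by
  intro z1 hz1
  by_contra hneg
  push Not at hneg
  have hsub : Metric.closedBall (0 : ℂ) ‖z1‖ ⊆ unitDisk := by
    intro w hw
    rw [mem_closedBall_zero_iff] at hw
    exact aux_mem_disk.2 (lt_of_le_of_lt hw (aux_mem_disk.1 hz1))
  have hcont : ContinuousOn (fun z => (P z).re) (Metric.closedBall (0 : ℂ) ‖z1‖) :=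
    Complex.continuous_re.comp_continuousOn (hP.continuousOn.mono hsub)
  obtain ⟨z0, hz0, hmin⟩ := (isCompact_closedBall (0 : ℂ) ‖z1‖).exists_isMinOn
    ⟨0, by simp⟩ hcont
  have hz0E := hsub hz0
  have hz0n : ‖z0‖ ≤ ‖z1‖ := by simpa using hz0
  have hle : (P z0).re ≤ 0 := (hmin (by simp : z1 ∈ Metric.closedBall (0 : ℂ) ‖z1‖)).trans hneg
  have hd : HasDerivAt P (deriv P z0) z0 :=
    (hP.differentiableAt (aux_isOpen_disk.mem_nhds hz0E)).hasDerivAt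
  -- angular direction
  have hang : (z0 * deriv P z0).im = 0 := by
    have h1 : HasDerivAt (fun t : ℝ => z0 * Complex.exp (t * I)) (z0 * I) 0 := by
      have h := ((Complex.ofRealCLM.hasDerivAt (x := (0 : ℝ))).mul_const I).cexp.const_mul z0
      simpa using h
    have h2 : HasDerivAt (fun t : ℝ => P (z0 * Complex.exp (t * I))) (deriv P z0 * (z0 * I)) 0 := by
      have hd' : HasDerivAt P (deriv P z0) (z0 * Complex.exp (((0 : ℝ) : ℂ) * I)) := by
        simpa using hd
      exact HasDerivAt.comp (0 : ℝ) hd' h1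
    have h3 : HasDerivAt (fun t : ℝ => (P (z0 * Complex.exp (t * I))).re)
        (deriv P z0 * (z0 * I)).re 0 :=
      Complex.reCLM.hasFDerivAt.comp_hasDerivAt (0 : ℝ) h2
    have h4 : IsLocalMin (fun t : ℝ => (P (z0 * Complex.exp (t * I))).re) 0 := by
      refine Filter.Eventually.of_forall fun t => ?_
      have : z0 * Complex.exp (t * I) ∈ Metric.closedBall (0 : ℂ) ‖z1‖ := by
        simpa [Complex.norm_exp_ofReal_mul_I] using hz0n
      simpa using hmin this
    have h5 := h4.hasDerivAt_eq_zero h3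
    simp only [mul_re, I_re, I_im, mul_im] at h5 ⊢
    linarith
  have hrad : (z0 * deriv P z0).re ≤ 0 := by
    have h1 : HasDerivAt (fun t : ℝ => z0 * (1 - (t : ℂ))) (-z0) 0 := by
      have h := ((Complex.ofRealCLM.hasDerivAt (x := (0 : ℝ))).const_sub 1).const_mul z0
      simpa using h
    have h2 : HasDerivAt (fun t : ℝ => P (z0 * (1 - (t : ℂ)))) (deriv P z0 * (-z0)) 0 := by
      have hd' : HasDerivAt P (deriv P z0) (z0 * (1 - ((0 : ℝ) : ℂ))) := by
        simpa using hd
      exact HasDerivAt.comp (0 : ℝ) hd' h1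
    have h3 : HasDerivAt (fun t : ℝ => (P (z0 * (1 - (t : ℂ)))).re)
        (deriv P z0 * (-z0)).re 0 :=
      Complex.reCLM.hasFDerivAt.comp_hasDerivAt (0 : ℝ) h2
    have h4 : 0 ≤ (deriv P z0 * (-z0)).re := by
      have h5 := (hasDerivAt_iff_tendsto_slope_zero.1 h3).mono_left
        (nhdsGT_le_nhdsNE (0 : ℝ))
      refine ge_of_tendsto h5 ?_
      have : ∀ᶠ t : ℝ in 𝓝[>] 0, t ∈ Set.Ioo (0 : ℝ) 1 := Ioo_mem_nhdsGT one_pos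
      filter_upwards [this] with t ht
      have hm : z0 * (1 - (t : ℂ)) ∈ Metric.closedBall (0 : ℂ) ‖z1‖ := by
        have : ‖(1 : ℂ) - t‖ ≤ 1 := by
          rw [← Complex.ofReal_one, ← Complex.ofReal_sub, Complex.norm_real, Real.norm_eq_abs,
            abs_le]
          constructor <;> linarith [ht.1, ht.2]
        rw [mem_closedBall_zero_iff, norm_mul]
        nlinarith [norm_nonneg z0, norm_nonneg ((1 : ℂ) - t)]
      have h6 : (P z0).re ≤ (P (z0 * (1 - (t : ℂ)))).re := hmin hm
      simp only [zero_add, smul_eq_mul, ofReal_zero, sub_zero, mul_one]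
      exact mul_nonneg (inv_nonneg.2 ht.1.le) (sub_nonneg.2 h6)
    simp only [mul_re, neg_re, neg_im] at h4 ⊢
    linarith
  have h1 := hH z0 hz0E
  rw [← hPH z0 hz0E, add_re, div_re, hang] at h1
  have h2 : (z0 * deriv P z0).re * γ.re / normSq γ ≤ 0 :=
    div_nonpos_of_nonpos_of_nonneg (mul_nonpos_of_nonpos_of_nonneg hrad hγ) (normSq_nonneg _)
  simp at h1 h2
  linarith

lemma aux_convex (p h : ℂ → ℂ) (γ : ℂ) (hγ : 0 ≤ γ.re) (Ω : Set ℂ) (hΩ : IsOpen Ω)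
    (hΩc : Convex ℝ Ω)
    (hp : DifferentiableOn ℂ p unitDisk)
    (hph : ∀ z ∈ unitDisk, p z + z * deriv p z / γ = h z)
    (hh : ∀ z ∈ unitDisk, h z ∈ Ω) : ∀ z ∈ unitDisk, p z ∈ Ω := by
  intro z hz
  by_contra hn
  obtain ⟨f, hf⟩ := geometric_hahn_banach_open_point hΩc hΩ hn
  set ν : ℂ := (f 1 : ℂ) - f I * I with hν
  have hfν : ∀ w : ℂ, f w = (ν * w).re := by
    intro w
    have : w = w.re • (1 : ℂ) + w.im • I := by
      apply Complex.ext <;> simp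
    conv_lhs => rw [this]
    rw [map_add, map_smul, map_smul]
    simp [hν]
    ring
  have := aux_half_plane (fun w => (f (p z) : ℂ) - ν * p w) (fun w => (f (p z) : ℂ) - ν * h w) γ hγ
    ((differentiableOn_const _).sub (hp.const_mul ν)) ?_ ?_ z hz
  · simp only [sub_re, ofReal_re, ← hfν] at this
    linarith
  · intro w hw
    have hd := (hp.differentiableAt (aux_isOpen_disk.mem_nhds hw)).hasDerivAt
    have := ((hd.const_mul ν).const_sub (f (p z) : ℂ)).deriv
    rw [this, ← hph w hw]
    ring
  · intro w hw
    simp only [sub_re, ofReal_re, ← hfν]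
    linarith [hf _ (hh w hw)]

lemma aux_not_ev_const (φ : ℂ → ℂ) (hinj : InjOn φ unitDisk) {x : ℂ} (hx : x ∈ unitDisk) :
    ¬ ∀ᶠ z in 𝓝 x, φ z = φ x := by
  intro h
  have h1 : ∀ᶠ z in 𝓝 x, z = x := by
    filter_upwards [h, aux_isOpen_disk.mem_nhds hx] with z hz hzE
    exact hinj hzE hx hz
  have h2 : ∀ᶠ z in 𝓝[≠] x, z = x := h1.filter_mono nhdsWithin_le_nhds
  have h3 : ∀ᶠ z in 𝓝[≠] x, z ≠ x := self_mem_nhdsWithin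
  obtain ⟨z, hz, hz'⟩ := (h2.and h3).exists
  exact hz' hz

lemma aux_image_nhds (φ : ℂ → ℂ) (hφ : AnalyticOnNhd ℂ φ unitDisk) (hinj : InjOn φ unitDisk)
    {x : ℂ} (hx : x ∈ unitDisk) : 𝓝 (φ x) ≤ map φ (𝓝 x) :=
  (hφ x hx).eventually_constant_or_nhds_le_map_nhds.resolve_left (aux_not_ev_const φ hinj hx)

lemma aux_image_open (φ : ℂ → ℂ) (hφ : AnalyticOnNhd ℂ φ unitDisk) (hinj : InjOn φ unitDisk) :
    IsOpen (φ '' unitDisk) := by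
  rw [isOpen_iff_mem_nhds]
  rintro _ ⟨x, hx, rfl⟩
  exact aux_image_nhds φ hφ hinj hx (Filter.image_mem_map (aux_isOpen_disk.mem_nhds hx))

lemma aux_inverse (φ : ℂ → ℂ) (hφ : AnalyticOnNhd ℂ φ unitDisk) (hinj : InjOn φ unitDisk) :
    AnalyticOnNhd ℂ (Function.invFunOn φ unitDisk) (φ '' unitDisk) := by
  set ψ := Function.invFunOn φ unitDisk with hψ
  have hl : ∀ x ∈ unitDisk, ψ (φ x) = x := fun x hx => hinj.leftInvOn_invFunOn hx
  have hopen := aux_image_open φ hφ hinj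
  have hr : ∀ y ∈ φ '' unitDisk, φ (ψ y) = y := by
    rintro _ ⟨x, hx, rfl⟩
    rw [hl x hx]
  have hc : ∀ x ∈ unitDisk, ContinuousAt ψ (φ x) := by
    intro x hx
    rw [ContinuousAt, hl x hx]
    refine (Filter.map_mono (aux_image_nhds φ hφ hinj hx)).trans ?_
    rw [Filter.map_map]
    have : (ψ ∘ φ) =ᶠ[𝓝 x] id := by
      filter_upwards [aux_isOpen_disk.mem_nhds hx] with z hz
      exact hl z hz
    exact (Filter.tendsto_congr' this).2 tendsto_id
  have hdiff : ∀ x ∈ unitDisk, deriv φ x ≠ 0 → DifferentiableAt ℂ ψ (φ x) := by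
    intro x hx hne
    refine (HasDerivAt.of_local_left_inverse (hc x hx) (f := φ) (f' := deriv φ x) ?_ hne ?_).differentiableAt
    · rw [hl x hx]
      exact (hφ x hx).differentiableAt.hasDerivAt
    · filter_upwards [hopen.mem_nhds (mem_image_of_mem φ hx)] with y hy
      exact hr y hy
  rintro _ ⟨x, hx, rfl⟩
  refine Complex.analyticAt_of_differentiable_on_punctured_nhds_of_continuousAt ?_ (hc x hx)
  have hz : ∀ᶠ z in 𝓝[≠] x, deriv φ z ≠ 0 := by
    refine (hφ x hx).deriv.eventually_eq_zero_or_eventually_ne_zero.resolve_left ?_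
    intro h0
    obtain ⟨r, hr0, hb⟩ := Metric.eventually_nhds_iff_ball.1
      (h0.and (aux_isOpen_disk.mem_nhds hx))
    apply aux_not_ev_const φ hinj hx
    filter_upwards [Metric.ball_mem_nhds x hr0] with z hz
    exact (convex_ball x r).is_const_of_fderivWithin_eq_zero (𝕜 := ℂ)
      (fun w hw => (hφ w (hb w hw).2).differentiableAt.differentiableWithinAt)
      (fun w hw => by
        rw [fderivWithin_of_isOpen Metric.isOpen_ball hw]
        ext
        simpa using (hb w hw).1) hz (Metric.mem_ball_self hr0)
  have hz' : ∀ᶠ z in 𝓝 x, z ≠ x → deriv φ z ≠ 0 := eventually_nhdsWithin_iff.1 hz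
  have hcx : Tendsto ψ (𝓝 (φ x)) (𝓝 x) := by simpa [ContinuousAt, hl x hx] using hc x hx
  rw [eventually_nhdsWithin_iff]
  filter_upwards [hcx.eventually hz', hopen.mem_nhds (mem_image_of_mem φ hx)] with y hy hyΩ hne
  obtain ⟨v, hv, rfl⟩ := hyΩ
  rw [hl v hv] at hy
  refine hdiff v hv (hy ?_)
  rintro rfl
  exact hne rfl

lemma aux_branch (μ : ℝ) (hμ0 : 0 < μ) (hμ1 : μ < 1) (u R J : ℂ → ℂ)
    (hu : AnalyticOnNhd ℂ u unitDisk) (hR : AnalyticOnNhd ℂ R unitDisk)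
    (hJ : ContinuousOn J unitDisk) (hu0 : u 0 = 1) (hR0 : R 0 = 1)
    (hune : ∀ z ∈ unitDisk, u z ≠ 0)
    (hJe : ∀ z ∈ unitDisk, J z = u z ^ (μ : ℂ) * R z) :
    ∀ z ∈ unitDisk, u z ∈ slitPlane := by
  by_contra hcon
  push Not at hcon
  obtain ⟨z0, hz0, hns⟩ := hcon
  have hopen : ∀ z ∈ unitDisk, 𝓝 (u z) ≤ map u (𝓝 z) := by
    intro z hz
    refine (hu z hz).eventually_constant_or_nhds_le_map_nhds.resolve_left ?_
    intro hc
    have hconst : ∀ w ∈ unitDisk, u w = u z := by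
      have := hu.eqOn_of_preconnected_of_eventuallyEq (g := fun _ => u z) analyticOnNhd_const
        aux_preconn hz hc
      exact this
    rw [hconst z0 hz0, ← hconst 0 aux_zero_mem, hu0] at hns
    exact hns one_mem_slitPlane
  have hneg : ∀ y : ℂ, y ≠ 0 → y ∉ slitPlane → y.re < 0 ∧ y.im = 0 := by
    intro y hy hs
    rw [mem_slitPlane_iff, not_or, not_lt, not_not] at hs
    refine ⟨lt_of_le_of_ne hs.1 fun h => hy (Complex.ext h hs.2), hs.2⟩
  have hA : ∀ z ∈ unitDisk, u z ∉ slitPlane → R z = 0 := by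
    intro z hz hs
    obtain ⟨hre, him⟩ := hneg _ (hune z hz) hs
    have hfr : ∃ᶠ w in 𝓝 z, u w ∈ {y : ℂ | y.im < 0} := by
      have h1 : ∃ᶠ y in 𝓝 (u z), y ∈ {y : ℂ | y.im < 0} := by
        rw [← mem_closure_iff_frequently, Complex.closure_setOfPred_im_lt]
        exact him.le
      exact Filter.frequently_map.1 (h1.filter_mono (hopen z hz))
    have hnb : (𝓝[u ⁻¹' {y : ℂ | y.im < 0}] z).NeBot :=
      mem_closure_iff_nhdsWithin_neBot.1 (mem_closure_iff_frequently.2 hfr)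
    have hut : Tendsto u (𝓝[u ⁻¹' {y : ℂ | y.im < 0}] z) (𝓝[{y : ℂ | y.im < 0}] (u z)) :=
      tendsto_nhdsWithin_iff.2 ⟨(hu z hz).continuousAt.tendsto.mono_left nhdsWithin_le_nhds,
        self_mem_nhdsWithin⟩
    have hlog := (Complex.tendsto_log_nhdsWithin_im_neg_of_re_neg_of_im_zero hre him).comp hut
    have hexp := ((Complex.continuous_exp.tendsto _).comp (hlog.mul_const (μ : ℂ))).mul
      ((hR z hz).continuousAt.tendsto.mono_left
        (nhdsWithin_le_nhds (s := u ⁻¹' {y : ℂ | y.im < 0})))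
    have hJt : Tendsto J (𝓝[u ⁻¹' {y : ℂ | y.im < 0}] z) (𝓝 (J z)) :=
      (hJ.continuousAt (aux_isOpen_disk.mem_nhds hz)).tendsto.mono_left nhdsWithin_le_nhds
    have heq : (fun w => (cexp ∘ fun x => (Complex.log ∘ u) x * (μ : ℂ)) w * R w)
        =ᶠ[𝓝[u ⁻¹' {y : ℂ | y.im < 0}] z] J := by
      filter_upwards [nhdsWithin_le_nhds (aux_isOpen_disk.mem_nhds hz)] with w hw
      rw [hJe w hw, Complex.cpow_def_of_ne_zero (hune w hw)]
      rfl
    have h1 := tendsto_nhds_unique (hexp.congr' heq) hJt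
    rw [hJe z hz, Complex.cpow_def_of_ne_zero (hune z hz)] at h1
    by_contra hRz
    have h2 := mul_right_cancel₀ hRz h1
    have harg : Complex.arg (u z) = Real.pi := Complex.arg_eq_pi_iff.2 ⟨hre, him⟩
    rw [Complex.log, harg, Complex.exp_eq_exp_iff_exists_int] at h2
    obtain ⟨n, hn⟩ := h2
    have h3 := congrArg Complex.im hn
    simp at h3
    have h4 : (-1 : ℝ) * μ = μ + 2 * n - 0 + (-0) := by
      have := Real.pi_pos
      have h5 : Real.pi * (-1 * μ) = Real.pi * (μ + 2 * n) := by linarith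
      have := mul_left_cancel₀ this.ne' h5
      linarith
    have h6 : (n : ℝ) = -μ := by linarith
    have h7 : (-1 : ℝ) < n := by linarith
    have h8 : (n : ℝ) < 0 := by linarith
    have h9 : (-1 : ℤ) < n := by exact_mod_cast h7
    have h10 : n < (0 : ℤ) := by exact_mod_cast h8
    omega
  obtain ⟨hre, him⟩ := hneg _ (hune z0 hz0) hns
  have hB : ∃ᶠ y in 𝓝 (u z0), y ≠ u z0 ∧ y ∉ slitPlane := by
    have ht : Tendsto (fun t : ℝ => u z0 - (t : ℂ)) (𝓝[>] 0) (𝓝 (u z0)) := by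
      have : Continuous (fun t : ℝ => u z0 - (t : ℂ)) := by fun_prop
      have h := (this.tendsto 0).mono_left (nhdsWithin_le_nhds (s := Set.Ioi (0 : ℝ)))
      simpa using h
    refine ht.frequently (Filter.Eventually.frequently ?_)
    filter_upwards [self_mem_nhdsWithin] with t ht
    have ht : 0 < t := ht
    constructor
    · intro h
      have := congrArg Complex.re h
      simp at this
      linarith
    · rw [mem_slitPlane_iff]
      simp [him]
      linarith
  have hC : ∃ᶠ z in 𝓝[≠] z0, R z = 0 := by
    have h1 := Filter.frequently_map.1 (hB.filter_mono (hopen z0 hz0))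
    rw [frequently_nhdsWithin_iff]
    refine (h1.and_eventually (aux_isOpen_disk.mem_nhds hz0)).mono ?_
    rintro z ⟨⟨hne, hsl⟩, hz⟩
    refine ⟨hA z hz hsl, ?_⟩
    rintro rfl
    exact hne rfl
  have := hR.eqOn_zero_of_preconnected_of_frequently_eq_zero aux_preconn hz0 hC aux_zero_mem
  simp [hR0] at this

/-- multiplier sequence of the operator -/
def auxM (k x : ℂ) (n : ℕ) : ℂ := x ^ n / (poch (3 / 2) n * poch k n)

lemma aux_poch_succ (k : ℂ) (n : ℕ) : poch k (n + 1) = poch k n * (k + n) := by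
  simp [poch, Finset.prod_range_succ]

lemma aux_poch_succ' (k : ℂ) (n : ℕ) : poch k (n + 1) = k * poch (k + 1) n := by
  rw [poch, Finset.prod_range_succ', poch, mul_comm]
  congr 1
  · simp
  · refine Finset.prod_congr rfl fun i _ => ?_
    push_cast
    ring

lemma aux_poch_ne (k : ℂ) (hk : NotNonposInt k) (n : ℕ) : poch k n ≠ 0 := by
  rw [poch, Finset.prod_ne_zero_iff]
  intro i _ h
  exact hk i (eq_neg_of_add_eq_zero_left h)

lemma auxM_bdd (k x : ℂ) : ∃ M : ℝ, ∀ n, ‖auxM k x n‖ ≤ M := by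
  have hs : Summable (auxM k x) := by
    refine summable_of_ratio_norm_eventually_le (r := 1 / 2) (by norm_num) ?_
    obtain ⟨N, hN⟩ := exists_nat_ge (2 * ‖x‖ + ‖k‖ + 1)
    filter_upwards [eventually_ge_atTop N] with n hn
    have hn' : (N : ℝ) ≤ n := by exact_mod_cast hn
    have he : auxM k x (n + 1) = (x / ((3 / 2 + n) * (k + n))) * auxM k x n := by
      simp only [auxM, aux_poch_succ, pow_succ, div_eq_mul_inv, mul_inv]
      ring
    rw [he, norm_mul]
    gcongr
    rw [norm_div, norm_mul]
    have h1 : (n : ℝ) ≤ ‖(3 / 2 + n : ℂ)‖ := by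
      have := Complex.re_le_norm (3 / 2 + n : ℂ)
      have h2 : (3 / 2 + n : ℂ).re = 3 / 2 + n := by
        have : (3 / 2 + n : ℂ) = ((3 / 2 + n : ℝ) : ℂ) := by push_cast; ring
        rw [this, ofReal_re]
      linarith
    have h3 : 1 ≤ ‖k + n‖ := by
      have := norm_sub_norm_le (n : ℂ) (-k)
      rw [norm_neg, sub_neg_eq_add, Complex.norm_natCast, add_comm] at this
      linarith [norm_nonneg x]
    have hx := norm_nonneg x
    have hk' := norm_nonneg k
    have h4 : (n : ℝ) ≤ ‖(3 / 2 + n : ℂ)‖ * ‖k + n‖ := by nlinarith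
    rw [div_le_iff₀ (by linarith)]
    linarith
  have := hs.tendsto_atTop_zero.norm.bddAbove_range
  obtain ⟨M, hM⟩ := this
  exact ⟨M, fun n => hM ⟨n, rfl⟩⟩

/-- the series `S_k^c f(z) / z` -/
def auxG (k c : ℂ) (a : ℕ → ℂ) (z : ℂ) : ℂ := ∑' n : ℕ, auxM k (-c / 4) n * a (n + 1) * z ^ n

lemma aux_summ_a (a : ℕ → ℂ) (ha : InA a) (z : ℂ) (hz : z ∈ unitDisk) :
    Summable fun n => a (n + 1) * z ^ n := by
  by_cases h : z = 0
  · subst h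
    refine summable_of_ne_finset_zero (s := {0}) fun n hn => ?_
    simp at hn
    simp [hn]
  · have h1 := ((summable_nat_add_iff 1).2 (ha.2.2 z hz)).mul_left z⁻¹
    refine h1.congr fun n => ?_
    field_simp
    ring

lemma aux_majorant (k c : ℂ) (a : ℕ → ℂ) (ha : InA a) (r : ℝ) (hr0 : 0 ≤ r) (hr : r < 1) :
    ∃ u : ℕ → ℝ, Summable u ∧ ∀ n, ∀ w ∈ Metric.ball (0 : ℂ) r,
      ‖auxM k (-c / 4) n * a (n + 1) * w ^ n‖ ≤ u n := by
  obtain ⟨M, hM⟩ := auxM_bdd k (-c / 4)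
  have h1 := (aux_summ_a a ha (r : ℂ) (by simpa [aux_mem_disk, abs_of_nonneg hr0] using hr)).norm
  refine ⟨_, h1.mul_left M, fun n w hw => ?_⟩
  rw [mem_ball_zero_iff] at hw
  rw [mul_assoc, norm_mul, norm_mul, norm_mul, norm_pow, norm_pow, Complex.norm_real,
    Real.norm_of_nonneg hr0]
  have hM0 := (norm_nonneg _).trans (hM n)
  gcongr
  exact hM n

lemma aux_exists_r {z : ℂ} (hz : z ∈ unitDisk) : ∃ r : ℝ, 0 ≤ r ∧ r < 1 ∧ z ∈ Metric.ball (0 : ℂ) r := by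
  obtain ⟨r, h1, h2⟩ := exists_between (aux_mem_disk.1 hz)
  exact ⟨r, (norm_nonneg z).trans h1.le, h2, by simpa using h1⟩

lemma auxG_diff (k c : ℂ) (a : ℕ → ℂ) (ha : InA a) : DifferentiableOn ℂ (auxG k c a) unitDisk := by
  intro z hz
  obtain ⟨r, h0, h1, hzr⟩ := aux_exists_r hz
  obtain ⟨u, hu, hle⟩ := aux_majorant k c a ha r h0 h1
  have := differentiableOn_tsum_of_summable_norm hu
    (F := fun n w => auxM k (-c / 4) n * a (n + 1) * w ^ n) (U := Metric.ball (0 : ℂ) r)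
    (fun n => by fun_prop) Metric.isOpen_ball hle
  exact (this.differentiableAt (Metric.isOpen_ball.mem_nhds hzr)).differentiableWithinAt

lemma auxG_hasSum (k c : ℂ) (a : ℕ → ℂ) (ha : InA a) {z : ℂ} (hz : z ∈ unitDisk) :
    HasSum (fun n => auxM k (-c / 4) n * a (n + 1) * z ^ n) (auxG k c a z) := by
  obtain ⟨r, h0, h1, hzr⟩ := aux_exists_r hz
  obtain ⟨u, hu, hle⟩ := aux_majorant k c a ha r h0 h1
  exact (Summable.of_norm_bounded hu fun n => hle n z hzr).hasSum

lemma auxG_deriv (k c : ℂ) (hk : NotNonposInt k) (a : ℕ → ℂ) (ha : InA a) {z : ℂ}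
    (hz : z ∈ unitDisk) :
    z * deriv (auxG (k + 1) c a) z = k * (auxG k c a z - auxG (k + 1) c a z) := by
  obtain ⟨r, h0, h1, hzr⟩ := aux_exists_r hz
  obtain ⟨u, hu, hle⟩ := aux_majorant (k + 1) c a ha r h0 h1
  have hd := (hasSum_deriv_of_summable_norm hu
    (F := fun n w => auxM (k + 1) (-c / 4) n * a (n + 1) * w ^ n) (U := Metric.ball (0 : ℂ) r)
    (fun n => by fun_prop) Metric.isOpen_ball hle hzr).mul_left z
  have h2 := ((auxG_hasSum k c a ha hz).sub (auxG_hasSum (k + 1) c a ha hz)).mul_left k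
  refine hd.unique (h2.congr_fun ?_)
  intro n
  have hM : k * auxM k (-c / 4) n = (k + n) * auxM (k + 1) (-c / 4) n := by
    have e1 := aux_poch_ne k hk n
    have e0 : k ≠ 0 := by simpa using hk 0
    have e2 := aux_poch_ne k hk (n + 1)
    have e4 := aux_poch_succ k n
    rw [aux_poch_succ'] at e2 e4
    have e3 : poch (k + 1) n ≠ 0 := right_ne_zero_of_mul e2
    have e5 : k / poch k n = (k + n) / poch (k + 1) n := by
      rw [div_eq_div_iff e1 e3, e4]; ring
    calc k * auxM k (-c / 4) n = (-c / 4) ^ n / poch (3 / 2) n * (k / poch k n) := by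
          simp only [auxM, div_eq_mul_inv, mul_inv]; ring
      _ = _ := by rw [e5]; simp only [auxM, div_eq_mul_inv, mul_inv]; ring
  have hdn : z * deriv (fun w : ℂ => auxM (k + 1) (-c / 4) n * a (n + 1) * w ^ n) z
      = auxM (k + 1) (-c / 4) n * a (n + 1) * (n * z ^ n) := by
    have := ((hasDerivAt_pow n z).const_mul (auxM (k + 1) (-c / 4) n * a (n + 1))).deriv
    rw [this]
    cases n with
    | zero => simp
    | succ m => simp [pow_succ]; ring
  rw [hdn]
  linear_combination (-(a (n + 1) * z ^ n)) * hM

lemma auxG_eq (k c : ℂ) (a : ℕ → ℂ) (ha : InA a) {z : ℂ} (hz : z ∈ unitDisk) :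
    struveOp k c a z = z * auxG k c a z := by
  rw [auxG, (auxG_hasSum k c a ha hz).summable.tsum_eq_zero_add, struveOp, mul_add, ← tsum_mul_left]
  congr 1
  · simp [auxM, poch, ha.2.1]
  · refine tsum_congr fun n => ?_
    simp only [auxM]
    ring

lemma auxG_zero (k c : ℂ) (a : ℕ → ℂ) (ha : InA a) : auxG k c a 0 = 1 := by
  rw [auxG, tsum_eq_single 0]
  · simp [auxM, poch, ha.2.1]
  · intro n hn
    simp [hn]

/-- if `f ∈ N_{k,c}^0(λ, μ, φ)` with `λ ≤ -1` and `Re(μk/λ) ≥ 0`,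
then `(S_k^c f(z)/S_{k+1}^c f(z)) (z/S_{k+1}^c f(z))^μ ≺ φ(z)`. -/
theorem quotient_subordination (μ : ℝ) (k c : ℂ) (lam : ℝ) (φ : ℂ → ℂ) (a : ℕ → ℂ)
    (hμ0 : 0 < μ) (hμ1 : μ < 1)
    (hk : NotNonposInt k) (hlam : lam ≤ -1)
    (hre : 0 ≤ ((μ : ℂ) * k / (lam : ℂ)).re)
    (hφ : ConvexUnivalent φ) (hφ0 : φ 0 = 1)
    (ha : InA a)
    (hnv : Nonvan (struveOp k c a)) (hnv1 : Nonvan (struveOp (k + 1) c a))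
    (hmem : memN 0 (lam : ℂ) μ k c φ a) :
    Subord
      (fun z => ratioQ (struveOp k c a) (struveOp (k + 1) c a) z *
        ratioPow μ (struveOp (k + 1) c a) z)
      φ := by
  have hk0 : k ≠ 0 := by simpa using hk 0
  have hμc : (μ : ℂ) ≠ 0 := by exact_mod_cast hμ0.ne'
  have hlr : lam ≠ 0 := by linarith
  have hlc : (lam : ℂ) ≠ 0 := by exact_mod_cast hlr
  obtain ⟨hφa, hφi, hφc⟩ := hφ
  set g0 := auxG k c a with hg0
  set g1 := auxG (k + 1) c a with hg1
  have hg0a : AnalyticOnNhd ℂ g0 unitDisk := (auxG_diff k c a ha).analyticOnNhd aux_isOpen_disk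
  have hg1a : AnalyticOnNhd ℂ g1 unitDisk :=
    (auxG_diff (k + 1) c a ha).analyticOnNhd aux_isOpen_disk
  have hg00 : g0 0 = 1 := auxG_zero k c a ha
  have hg10 : g1 0 = 1 := auxG_zero (k + 1) c a ha
  have hg1ne : ∀ z ∈ unitDisk, g1 z ≠ 0 := by
    intro z hz h
    by_cases h0 : z = 0
    · rw [h0, hg10] at h
      exact one_ne_zero h
    · apply hnv1 z hz h0
      rw [auxG_eq (k + 1) c a ha hz, ← hg1, h, mul_zero]
  set u : ℂ → ℂ := fun z => (g1 z)⁻¹ with hu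
  have hua : AnalyticOnNhd ℂ u unitDisk := hg1a.inv hg1ne
  have hune : ∀ z ∈ unitDisk, u z ≠ 0 := fun z hz => inv_ne_zero (hg1ne z hz)
  have hpow : ∀ z ∈ unitDisk, ratioPow μ (struveOp (k + 1) c a) z = u z ^ (μ : ℂ) := by
    intro z hz
    rw [ratioPow]
    congr 1
    split_ifs with h
    · rw [h, hu]; simp [hg10]
    · rw [auxG_eq (k + 1) c a ha hz, ← hg1, hu]
      have := hg1ne z hz
      field_simp
  have hq : ∀ z ∈ unitDisk, ratioQ (struveOp k c a) (struveOp (k + 1) c a) z = g0 z * u z := by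
    intro z hz
    rw [ratioQ]
    split_ifs with h
    · rw [h, hu]; simp [hg10, hg00]
    · rw [auxG_eq (k + 1) c a ha hz, auxG_eq k c a ha hz, ← hg1, ← hg0, hu]
      have := hg1ne z hz
      field_simp
  obtain ⟨w, hwa, hw0, hw1, hwe⟩ := hmem
  set R : ℂ → ℂ := fun z => 1 + lam - lam * (g0 z * u z) with hR
  have hJe : ∀ z ∈ unitDisk, φ (w z) = u z ^ (μ : ℂ) * R z := by
    intro z hz
    have h := hwe z hz
    simp only [Jfun, hpow z hz, hq z hz] at h
    simp at h
    rw [← h, hR]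
    ring
  have hwE : ∀ z ∈ unitDisk, w z ∈ unitDisk := fun z hz => aux_mem_disk.2 (hw1 z hz)
  have hJa : AnalyticOnNhd ℂ (fun z => φ (w z)) unitDisk := fun z hz =>
    (hφa (w z) (hwE z hz)).fun_comp (hwa z hz)
  have hRa : AnalyticOnNhd ℂ R unitDisk :=
    analyticOnNhd_const.sub (analyticOnNhd_const.mul (hg0a.mul hua))
  have hslit := aux_branch μ hμ0 hμ1 u R (fun z => φ (w z)) hua hRa hJa.continuousOn
    (by simp [hu, hg10]) (by simp [hR, hu, hg10, hg00]) hune hJe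
  set p : ℂ → ℂ := fun z => u z ^ (μ : ℂ) with hp
  have hpa : AnalyticOnNhd ℂ p unitDisk := hua.cpow analyticOnNhd_const hslit
  have hΩ := aux_image_open φ hφa hφi
  have hpmem := aux_convex p (fun z => φ (w z)) ((μ : ℂ) * k / (lam : ℂ)) hre (φ '' unitDisk) hΩ hφc
    hpa.differentiableOn (by
      intro z hz
      have hd1 : HasDerivAt g1 (deriv g1 z) z := (hg1a z hz).differentiableAt.hasDerivAt
      have hdu := hd1.inv (hg1ne z hz)
      have hdp := (hdu.cpow_const (c := (μ : ℂ)) (hslit z hz)).deriv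
      have hdp' : deriv p z = (μ : ℂ) * u z ^ ((μ : ℂ) - 1) * (-deriv g1 z / g1 z ^ 2) := hdp
      have hk1 : z * deriv g1 z = k * (g0 z - g1 z) := auxG_deriv k c hk a ha hz
      have hzp : z * deriv p z = -(μ * k * p z * (g0 z * u z - 1)) := by
        rw [hdp', Complex.cpow_sub _ _ (hune z hz), Complex.cpow_one]
        have e := hg1ne z hz
        have e2 : z * ((μ : ℂ) * (u z ^ (μ : ℂ) / u z) * (-deriv g1 z / g1 z ^ 2))
            = -((μ : ℂ) * (u z ^ (μ : ℂ) / u z) * ((z * deriv g1 z) / g1 z ^ 2)) := by ring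
        rw [e2, hk1]
        simp only [hp, hu]
        field_simp
      show p z + z * deriv p z / ((μ : ℂ) * k / (lam : ℂ)) = φ (w z)
      rw [hzp, hJe z hz, hR]
      simp only [hp]
      field_simp
      ring)
    (fun z hz => mem_image_of_mem φ (hwE z hz))
  set Q : ℂ → ℂ := fun z => g0 z * u z * p z with hQ
  have hQa : AnalyticOnNhd ℂ Q unitDisk := (hg0a.mul hua).mul hpa
  have hQm : ∀ z ∈ unitDisk, Q z ∈ φ '' unitDisk := by
    intro z hz
    have h1 : φ (w z) ∈ φ '' unitDisk := mem_image_of_mem φ (hwE z hz)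
    have hl : -1 ≤ lam⁻¹ := by
      rw [le_inv_of_neg (by norm_num) (by linarith)]
      simpa using hlam
    have hl2 : lam⁻¹ ≤ 0 := inv_nonpos.2 (by linarith)
    have h2 := hφc h1 (hpmem z hz) (a := -lam⁻¹) (b := 1 + lam⁻¹) (by linarith) (by linarith)
      (by ring)
    convert h2 using 1
    rw [hJe z hz]
    simp only [hQ, hp, hR, Complex.real_smul]
    push_cast
    field_simp
    ring
  have hψ := aux_inverse φ hφa hφi
  have hQ0 : Q 0 = φ 0 := by simp [hQ, hp, hu, hg00, hg10, hφ0]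
  refine ⟨fun z => Function.invFunOn φ unitDisk (Q z),
    fun z hz => (hψ (Q z) (hQm z hz)).fun_comp (hQa z hz), ?_, ?_, ?_⟩
  · show Function.invFunOn φ unitDisk (Q 0) = 0
    rw [hQ0]
    exact hφi.leftInvOn_invFunOn aux_zero_mem
  · intro z hz
    exact aux_mem_disk.1 (Function.invFunOn_mem (hQm z hz))
  · intro z hz
    have h1 : φ (Function.invFunOn φ unitDisk (Q z)) = Q z := Function.invFunOn_eq (hQm z hz)
    show _ = φ (Function.invFunOn φ unitDisk (Q z))
    rw [h1]
    beta_reduce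
    rw [hq z hz, hpow z hz]
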